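/- Let n ≥ 4 and let P = {p_0, …, p_{n−1}} be n distinct points on the unit circle listed in counterclockwise cyclic order. A triangulation τ of P is angle maximal if and only if it is length maximal. -/

import Mathlib

/-!
By the inscribed angle theorem, the angle of a triangle of `τ` facing a side is half of the circle
arc cut off by that side on the far side of the triangle. Every chord is a side of exactly one
triangle of `τ` and every diagonal of `τ` is a side of exactly two, one on each side of it. Hence
the multiset of angles of `τ` is `K + M + (π - M)`, where `K` (the half arcs of the chords) does not
depend on `τ` and `M` is the multiset of the numbers `arcsin (len d / 2) ≤ π / 2`, `d ∈ τ`
(`sortedAngles_eq`).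

All triangulations have the same number of diagonals, so two sorted lists of lengths are compared
by splitting off the common part of the two multisets and looking at the least remaining element
(`MLt`, `MLt.trichotomy`, `MLt.lex`). This comparison is unaffected by the strictly increasing map
`x ↦ arcsin (x / 2)` (`MLt.map`) and by adding `K` and the reflected elements, which are all at
least `π / 2` (`MLt.reflect`). So the sorted angle lists of two triangulations compare in the same
way as their sorted length lists.

The combinatorial input is proved for non-crossing families `S` of pairs of natural numbers, i.e.
for `τ` together with the chord `{0, n - 1}`. Among the vertices `a, …, b` there are at most
`b - a - 1` members of `S` (`NonCrossing.card_within`); in the case of equality `(a, b)` belongs to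
`S` and some apex `k` splits `[a, b]` into two parts which again attain the bound
(`NonCrossing.tight_split`). Induction along this splitting computes the angle multiset
(`NonCrossing.sum_tris`).
-/

/-- The point on the unit circle of `ℝ²` at angle `θ`. -/
noncomputable def pt (θ : ℝ) : EuclideanSpace ℝ (Fin 2) :=
  (WithLp.equiv 2 (Fin 2 → ℝ)).symm ![Real.cos θ, Real.sin θ]

variable {n : ℕ} [NeZero n]

/-- `k` lies strictly between `i` and `j` in counterclockwise cyclic order. -/
def CcwBtw (i k j : ZMod n) : Prop :=
  0 < (k - i).val ∧ (k - i).val < (j - i).val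

/-- `d` is a diagonal of the convex polygon on indices `ZMod n`. -/
def IsDiag (d : Sym2 (ZMod n)) : Prop :=
  ∃ i j : ZMod n, d = s(i, j) ∧ j ≠ i - 1 ∧ j ≠ i ∧ j ≠ i + 1

/-- `d` is a chord, i.e. a pair of cyclically consecutive indices. -/
def IsChord (d : Sym2 (ZMod n)) : Prop :=
  ∃ i : ZMod n, d = s(i, i + 1)

/-- Two diagonals `{i, j}` and `{k, l}` cross if exactly one of `k`, `l` lies
strictly between `i` and `j` in cyclic order (equivalently, one of them lies
strictly in the arc from `i` to `j` and the other strictly in the arc from `j`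
to `i`). -/
def Crosses (d e : Sym2 (ZMod n)) : Prop :=
  ∃ i j k l : ZMod n, d = s(i, j) ∧ e = s(k, l) ∧ CcwBtw i k j ∧ CcwBtw j l i

/-- A triangulation: `n - 3` pairwise non-crossing diagonals. -/
def IsTriangulation (τ : Finset (Sym2 (ZMod n))) : Prop :=
  τ.card = n - 3 ∧ (∀ d ∈ τ, IsDiag d) ∧ ∀ d ∈ τ, ∀ e ∈ τ, ¬ Crosses d e

/-- The length of the segment joining the two points indexed by `d`. -/
noncomputable def len (p : ZMod n → EuclideanSpace ℝ (Fin 2)) (d : Sym2 (ZMod n)) : ℝ :=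
  Sym2.lift ⟨fun i j => ‖p i - p j‖, fun _ _ => norm_sub_rev _ _⟩ d

/-- `D(τ)`: the lengths of the diagonals of `τ` sorted in nondecreasing order. -/
noncomputable def sortedLengths (p : ZMod n → EuclideanSpace ℝ (Fin 2))
    (τ : Finset (Sym2 (ZMod n))) : List ℝ :=
  (τ.val.map (len p)).sort (· ≤ ·)

/-- Lexicographic order on lists of reals. -/
def lexLE (l l' : List ℝ) : Prop := l = l' ∨ List.Lex (· < ·) l l'

/-- `τ` is length maximal: it is a triangulation whose sorted list of diagonal
lengths is greatest in the lexicographic order among all triangulations. -/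
def LengthMaximal (p : ZMod n → EuclideanSpace ℝ (Fin 2))
    (τ : Finset (Sym2 (ZMod n))) : Prop :=
  IsTriangulation τ ∧
    ∀ τ' : Finset (Sym2 (ZMod n)), IsTriangulation τ' →
      lexLE (sortedLengths p τ') (sortedLengths p τ)

/-- A side of a triangle of `τ`: a chord, or a diagonal belonging to `τ`. -/
def IsSide (τ : Finset (Sym2 (ZMod n))) (d : Sym2 (ZMod n)) : Prop :=
  IsChord d ∨ d ∈ τ

open scoped Classical in
/-- `A(τ)`: the `3(n-2)` angles of the triangles of `τ` sorted in nondecreasing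
order.  Triangles are recorded as triples `a < b < c` (ordered by residue) all of
whose sides are chords or diagonals of `τ`, each contributing its three angles. -/
noncomputable def sortedAngles (p : ZMod n → EuclideanSpace ℝ (Fin 2))
    (τ : Finset (Sym2 (ZMod n))) : List ℝ :=
  ((Finset.univ.filter fun x : ZMod n × ZMod n × ZMod n =>
      x.1.val < x.2.1.val ∧ x.2.1.val < x.2.2.val ∧
      IsSide τ s(x.1, x.2.1) ∧ IsSide τ s(x.2.1, x.2.2) ∧ IsSide τ s(x.1, x.2.2)).val.bind
    fun x =>
      {EuclideanGeometry.angle (p x.2.1) (p x.1) (p x.2.2),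
       EuclideanGeometry.angle (p x.1) (p x.2.1) (p x.2.2),
       EuclideanGeometry.angle (p x.1) (p x.2.2) (p x.2.1)}).sort (· ≤ ·)

/-- `τ` is angle maximal: it is a triangulation whose sorted list of angles is
greatest in the lexicographic order among all triangulations. -/
def AngleMaximal (p : ZMod n → EuclideanSpace ℝ (Fin 2))
    (τ : Finset (Sym2 (ZMod n))) : Prop :=
  IsTriangulation τ ∧
    ∀ τ' : Finset (Sym2 (ZMod n)), IsTriangulation τ' →
      lexLE (sortedAngles p τ') (sortedAngles p τ)

/-- The ear `e_i = {i-1, i+1}`. -/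
def ear (i : ZMod n) : Sym2 (ZMod n) := s(i - 1, i + 1)

/-- `P` contains a symmetric quadruple: indices `i < j < k < l` with
`‖p i - p k‖ = ‖p j - p l‖`. -/
def HasSymQuad (p : ZMod n → EuclideanSpace ℝ (Fin 2)) : Prop :=
  ∃ i j k l : ZMod n, i.val < j.val ∧ j.val < k.val ∧ k.val < l.val ∧
    ‖p i - p k‖ = ‖p j - p l‖

/-! ### Non-crossing families of pairs of natural numbers -/

/-- `S` is a family of pairs `x < y` that are not consecutive and do not cross pairwise. The pair
`(0, n - 1)`, a chord of the polygon on `0, …, n - 1`, is allowed in `S`. -/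
structure NonCrossing (S : Finset (ℕ × ℕ)) : Prop where
  long : ∀ x y, (x, y) ∈ S → x + 2 ≤ y
  nocross : ∀ x y z w, (x, y) ∈ S → (z, w) ∈ S → x < z → z < y → y < w → False

/-- `x < y` are joined: they are consecutive, or `(x, y)` is in `S`. -/
def Side (S : Finset (ℕ × ℕ)) (x y : ℕ) : Prop := y = x + 1 ∨ (x, y) ∈ S

/-- The members of `S` with both endpoints in `[a, b]`. -/
def within (S : Finset (ℕ × ℕ)) (a b : ℕ) : Finset (ℕ × ℕ) :=
  S.filter fun e => a ≤ e.1 ∧ e.2 ≤ b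

open scoped Classical in
/-- The triangles `x < y < z` of `S` with vertices in `[a, b]`. -/
noncomputable def tris (S : Finset (ℕ × ℕ)) (a b : ℕ) : Finset (ℕ × ℕ × ℕ) :=
  (Finset.Icc a b ×ˢ Finset.Icc a b ×ˢ Finset.Icc a b).filter fun t =>
    t.1 < t.2.1 ∧ t.2.1 < t.2.2 ∧ Side S t.1 t.2.1 ∧ Side S t.2.1 t.2.2 ∧ Side S t.1 t.2.2

lemma mem_within {S : Finset (ℕ × ℕ)} {a b x y : ℕ} :
    (x, y) ∈ within S a b ↔ (x, y) ∈ S ∧ a ≤ x ∧ y ≤ b := by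
  simp [within]

lemma mem_tris {S : Finset (ℕ × ℕ)} {a b x y z : ℕ} :
    (x, y, z) ∈ tris S a b ↔ a ≤ x ∧ z ≤ b ∧ x < y ∧ y < z ∧
      Side S x y ∧ Side S y z ∧ Side S x z := by
  simp only [tris, Finset.mem_filter, Finset.mem_product, Finset.mem_Icc]
  constructor
  · rintro ⟨⟨⟨h1, h2⟩, ⟨h3, h4⟩, h5, h6⟩, h7, h8, h9⟩
    exact ⟨h1, h6, h7, h8, h9⟩
  · rintro ⟨h1, h6, h7, h8, h9⟩
    exact ⟨by omega, h7, h8, h9⟩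

/-- Splitting at the largest `k < b` joined to `a` separates all members of `S` within `[a, b]`
other than `(a, b)`: one that straddles `k` and starts at `a` would contradict the choice of `k`,
and one that starts after `a` would cross `(a, k)`. -/
lemma NonCrossing.exists_split {S : Finset (ℕ × ℕ)} (hS : NonCrossing S) {a b : ℕ}
    (hab : a + 2 ≤ b) : ∃ k, a < k ∧ k < b ∧ Side S a k ∧
      within S a b ⊆ insert (a, b) (within S a k ∪ within S k b) := by
  classical
  set K := (Finset.Ioo a b).filter fun k => Side S a k with hK
  have hne : K.Nonempty := ⟨a + 1, Finset.mem_filter.2 ⟨Finset.mem_Ioo.2 (by omega), Or.inl rfl⟩⟩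
  obtain ⟨k, hk, hmax⟩ : ∃ k ∈ K, ∀ j ∈ K, j ≤ k :=
    ⟨K.max' hne, K.max'_mem hne, fun j hj => K.le_max' j hj⟩
  simp only [hK, Finset.mem_filter, Finset.mem_Ioo] at hk hmax
  obtain ⟨⟨hak, hkb⟩, hside⟩ := hk
  refine ⟨k, hak, hkb, hside, ?_⟩
  rintro ⟨x, y⟩ hxy
  rw [mem_within] at hxy
  obtain ⟨hxy, hax, hyb⟩ := hxy
  have hl := hS.long x y hxy
  simp only [Finset.mem_insert, Finset.mem_union, mem_within, Prod.mk.injEq, hxy, true_and]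
  by_contra! hcon
  obtain ⟨h1, h2, h3⟩ := hcon
  have hyk : k < y := h2 hax
  have hxk : x < k := by by_contra h; have := h3 (by omega); omega
  rcases Nat.eq_or_lt_of_le hax with rfl | hax
  · have := hmax y ⟨⟨by omega, by omega⟩, Or.inr hxy⟩
    omega
  · rcases hside with rfl | hside
    · omega
    · exact hS.nocross a k x y hside hxy hax hxk hyk

lemma NonCrossing.within_split {S : Finset (ℕ × ℕ)} (hS : NonCrossing S) {a k b : ℕ} :
    Disjoint (within S a k) (within S k b) := by
  rw [Finset.disjoint_left]
  rintro ⟨x, y⟩ h1 h2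
  rw [mem_within] at h1 h2
  have := hS.long x y h1.1
  omega

/-- At most `b - a - 1` members of `S` lie within `[a, b]`; `m` is the induction parameter. -/
lemma NonCrossing.card_within {S : Finset (ℕ × ℕ)} (hS : NonCrossing S) (m : ℕ) :
    ∀ a b, a < b → b - a ≤ m → (within S a b).card + 1 + a ≤ b := by
  induction m with
  | zero => intro a b; omega
  | succ m ih =>
    intro a b hab hm
    by_cases h : a + 2 ≤ b
    · obtain ⟨k, hak, hkb, -, hsub⟩ := hS.exists_split h
      have h1 := ih a k hak (by omega)
      have h2 := ih k b hkb (by omega)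
      have h3 := Finset.card_le_card hsub
      have h4 := Finset.card_insert_le (a, b) (within S a k ∪ within S k b)
      have h5 := Finset.card_union_le (within S a k) (within S k b)
      omega
    · have : within S a b = ∅ := by
        rw [Finset.eq_empty_iff_forall_notMem]
        rintro ⟨x, y⟩ h1
        rw [mem_within] at h1
        have := hS.long x y h1.1
        omega
      simp [this]; omega

/-- If `[a, b]` contains the largest possible number of members of `S`, then `(a, b) ∈ S` is the
side of a triangle with apex `k`, and `[a, k]` and `[k, b]` attain the bound as well. -/
lemma NonCrossing.tight_split {S : Finset (ℕ × ℕ)} (hS : NonCrossing S) {a b : ℕ}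
    (hab : a + 2 ≤ b) (ht : (within S a b).card + 1 + a = b) :
    ∃ k, a < k ∧ k < b ∧ Side S a k ∧ (a, b) ∈ S ∧
      (within S a k).card + 1 + a = k ∧ (within S k b).card + 1 + k = b ∧
      within S a b = insert (a, b) (within S a k ∪ within S k b) := by
  obtain ⟨k, hak, hkb, hside, hsub⟩ := hS.exists_split hab
  have h1 := hS.card_within _ a k hak le_rfl
  have h2 := hS.card_within _ k b hkb le_rfl
  have h3 := Finset.card_le_card hsub
  have h4 := Finset.card_insert_le (a, b) (within S a k ∪ within S k b)
  have h5 := Finset.card_union_le (within S a k) (within S k b)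
  have heq := Finset.eq_of_subset_of_card_le hsub (by omega)
  have hm : (a, b) ∈ within S a b := by rw [heq]; simp
  exact ⟨k, hak, hkb, hside, (mem_within.1 hm).1, by omega, by omega, heq⟩

lemma NonCrossing.side_of_tight {S : Finset (ℕ × ℕ)} (hS : NonCrossing S) {a b : ℕ}
    (hab : a < b) (ht : (within S a b).card + 1 + a = b) : Side S a b := by
  by_cases h : a + 2 ≤ b
  · obtain ⟨k, -, -, -, h, -⟩ := hS.tight_split h ht
    exact Or.inr h
  · exact Or.inl (by omega)

/-- If `[a, b]` attains the bound on members of `S`, and the triangle `x < y < z` is given the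
angles `f y z`, `π - f x z`, `f x y`, then the angles of all triangles within `[a, b]` are: `f` of
each pair of consecutive numbers, and `f e`, `π - f e` for each `e ∈ S`, with one `f a b` removed.
That value would belong to a triangle beyond `(a, b)`, or, when `b = a + 1`, it is the term of the
single consecutive pair. -/
lemma NonCrossing.sum_tris {S : Finset (ℕ × ℕ)} (hS : NonCrossing S) (f : ℕ → ℕ → ℝ) (m : ℕ) :
    ∀ a b, a < b → b - a ≤ m → (within S a b).card + 1 + a = b →
      (∑ t ∈ tris S a b,
        ({f t.2.1 t.2.2, Real.pi - f t.1 t.2.2, f t.1 t.2.1} : Multiset ℝ)) + {f a b} =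
      (∑ x ∈ Finset.Ico a b, {f x (x + 1)}) +
        ∑ e ∈ within S a b, ({f e.1 e.2, Real.pi - f e.1 e.2} : Multiset ℝ) := by
  classical
  induction m with
  | zero => intro a b; omega
  | succ m ih =>
    intro a b hab hm ht
    by_cases h : a + 2 ≤ b
    · obtain ⟨k, hak, hkb, hs1, hmem, ht1, ht2, heq⟩ := hS.tight_split h ht
      have hs2 := hS.side_of_tight hkb ht2
      have htris : tris S a b = insert (a, k, b) (tris S a k ∪ tris S k b) := by
        ext ⟨x, y, z⟩
        simp only [Finset.mem_insert, Finset.mem_union, mem_tris, Prod.mk.injEq]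
        constructor
        · rintro ⟨hax, hzb, hxy, hyz, sxy, syz, sxz⟩
          have hxz : (x, z) ∈ within S a b := by
            rw [mem_within]
            rcases sxz with h | h
            · omega
            · exact ⟨h, hax, hzb⟩
          rw [heq, Finset.mem_insert, Finset.mem_union, mem_within, mem_within,
            Prod.mk.injEq] at hxz
          rcases hxz with ⟨rfl, rfl⟩ | hxz | hxz
          · left
            refine ⟨rfl, ?_, rfl⟩
            -- two different apices over the same side would give crossing diagonals
            rcases lt_trichotomy y k with hlt | heq | hgt
            · exfalso
              rcases hs1 with h1 | h1
              · omega
              rcases syz with h2 | h2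
              · omega
              exact hS.nocross _ _ _ _ h1 h2 hxy hlt hkb
            · exact heq
            · exfalso
              rcases sxy with h1 | h1
              · omega
              rcases hs2 with h2 | h2
              · omega
              exact hS.nocross _ _ _ _ h1 h2 hak hgt hyz
          · exact Or.inr (Or.inl ⟨hxz.2.1, hxz.2.2, hxy, hyz, sxy, syz, sxz⟩)
          · exact Or.inr (Or.inr ⟨hxz.2.1, hxz.2.2, hxy, hyz, sxy, syz, sxz⟩)
        · rintro (⟨rfl, rfl, rfl⟩ | ⟨h1, h2, h3⟩ | ⟨h1, h2, h3⟩)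
          · exact ⟨le_rfl, le_rfl, hak, hkb, hs1, hs2, Or.inr hmem⟩
          · exact ⟨h1, by omega, h3⟩
          · exact ⟨by omega, h2, h3⟩
      have hdt : Disjoint (tris S a k) (tris S k b) := by
        rw [Finset.disjoint_left]
        rintro ⟨x, y, z⟩ h1 h2
        rw [mem_tris] at h1 h2
        omega
      have hnt : (a, k, b) ∉ tris S a k ∪ tris S k b := by
        simp only [Finset.mem_union, mem_tris]; omega
      have hnw : (a, b) ∉ within S a k ∪ within S k b := by
        simp only [Finset.mem_union, mem_within]; omega
      have i1 := ih a k hak (by omega) ht1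
      have i2 := ih k b hkb (by omega) ht2
      rw [htris, Finset.sum_insert hnt, Finset.sum_union hdt, heq, Finset.sum_insert hnw,
        Finset.sum_union hS.within_split, ← Finset.sum_Ico_consecutive _ hak.le hkb.le]
      simp only [Multiset.insert_eq_cons, ← Multiset.singleton_add] at i1 i2 ⊢
      calc _ = _ := ?_
        _ = _ := congrArg₂ (fun u v => u + v + ({f a b} + {Real.pi - f a b})) i1 i2
        _ = _ := ?_
      · abel
      · abel
    · obtain rfl : b = a + 1 := by omega
      have h1 : within S a (a + 1) = ∅ := by
        rw [← Finset.card_eq_zero]; omega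
      have h2 : tris S a (a + 1) = ∅ := by
        rw [Finset.eq_empty_iff_forall_notMem]
        rintro ⟨x, y, z⟩ h1
        rw [mem_tris] at h1
        omega
      simp [h1, h2]

/-! ### Lexicographic comparison of sorted multisets -/

/-- After a common part `C` is removed, the least remaining element `x` of `M` is smaller than all
remaining elements of `N`, which are equally many. Thus `M` and `N` have the same size, and `M`
sorted is lexicographically smaller than `N` sorted. -/
def MLt (M N : Multiset ℝ) : Prop :=
  ∃ (C M' N' : Multiset ℝ) (x : ℝ), M = C + (x ::ₘ M') ∧ N = C + N' ∧
    (x ::ₘ M').card = N'.card ∧ (∀ y ∈ M', x ≤ y) ∧ ∀ y ∈ N', x < y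

lemma MLt.trichotomy {M N : Multiset ℝ} (h : M.card = N.card) :
    M = N ∨ MLt M N ∨ MLt N M := by
  classical
  have hM : M = M ∩ N + (M - N) := by
    ext x; simp only [Multiset.count_add, Multiset.count_inter, Multiset.count_sub]; omega
  have hN : N = M ∩ N + (N - M) := by
    ext x; simp only [Multiset.count_add, Multiset.count_inter, Multiset.count_sub]; omega
  have hc : (M - N).card = (N - M).card := by
    have h1 := congrArg Multiset.card hM
    have h2 := congrArg Multiset.card hN
    rw [Multiset.card_add] at h1 h2
    omega
  have hd : ∀ x, x ∈ M - N → x ∈ N - M → False := by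
    intro x h1 h2
    rw [← Multiset.count_pos, Multiset.count_sub] at h1 h2
    omega
  generalize M ∩ N = C at hM hN
  generalize M - N = A at hM hc hd
  generalize N - M = B at hN hc hd
  subst hM hN
  by_cases hA : A = 0
  · left
    have : B = 0 := by rw [← Multiset.card_eq_zero, ← hc, hA]; rfl
    rw [hA, this]
  right
  obtain ⟨x, hx, hmin⟩ : ∃ x ∈ (A + B).toFinset, ∀ y ∈ (A + B).toFinset, x ≤ y := by
    apply Finset.exists_min_image _ id
    obtain ⟨a, ha⟩ := Multiset.exists_mem_of_ne_zero hA
    exact ⟨a, by simp [ha]⟩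
  simp only [Multiset.mem_toFinset, Multiset.mem_add] at hx hmin
  have key : ∀ A B : Multiset ℝ, A.card = B.card → (∀ x, x ∈ A → x ∈ B → False) → x ∈ A →
      (∀ y, y ∈ A ∨ y ∈ B → x ≤ y) → MLt (C + A) (C + B) := by
    intro A B hc hd hx hmin
    obtain ⟨A', rfl⟩ := Multiset.exists_cons_of_mem hx
    refine ⟨C, A', B, x, rfl, rfl, hc, fun y hy => hmin y (by simp [hy]), fun y hy => ?_⟩
    refine lt_of_le_of_ne (hmin y (Or.inr hy)) ?_
    rintro rfl
    exact hd _ hx hy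
  rcases hx with hx | hx
  · exact Or.inl (key A B hc hd hx hmin)
  · exact Or.inr (key B A hc.symm (fun x h1 h2 => hd x h2 h1) hx (fun y hy => hmin y hy.symm))

/-- For sorted lists of equal length, the one with more copies of the least element `x` at which
the multiplicities differ is lexicographically smaller. -/
lemma lex_of_count (l : List ℝ) : ∀ l' : List ℝ, l.Pairwise (· ≤ ·) → l'.Pairwise (· ≤ ·) →
    l.length = l'.length → ∀ x, (∀ y < x, l.count y = l'.count y) → l'.count x < l.count x →
    List.Lex (· < ·) l l' := by
  induction l with
  | nil => intro l' _ _ _ x _ h; simp at h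
  | cons a t ih =>
    intro l' hl hl' hlen x hlt hx
    cases l' with
    | nil => simp at hlen
    | cons b t' =>
      rw [List.pairwise_cons] at hl hl'
      rcases lt_trichotomy a b with hab | rfl | hab
      · exact List.Lex.rel hab
      · refine List.Lex.cons (ih t' hl.2 hl'.2 (by simpa using hlen) x (fun y hy => ?_) ?_)
        · have := hlt y hy
          simp only [List.count_cons] at this
          omega
        · simp only [List.count_cons] at hx
          omega
      · exfalso
        have h0 : ∀ z, z < a → (a :: t).count z = 0 := by
          intro z hz
          rw [List.count_eq_zero, List.mem_cons]
          rintro (rfl | h)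
          · exact lt_irrefl _ hz
          · exact absurd (hl.1 z h) (not_le.2 hz)
        have hxa : ¬ x < a := fun h => by rw [h0 x h] at hx; omega
        have h1 := hlt b (by linarith)
        rw [h0 b hab] at h1
        simp at h1

lemma MLt.lex {M N : Multiset ℝ} (h : MLt M N) :
    List.Lex (· < ·) (M.sort (· ≤ ·)) (N.sort (· ≤ ·)) := by
  obtain ⟨C, M', N', x, rfl, rfl, hc, hM, hN⟩ := h
  have hN0 : ∀ y ≤ x, N'.count y = 0 := fun y hy =>
    Multiset.count_eq_zero.2 fun h => absurd (hN y h) (not_lt.2 hy)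
  refine lex_of_count _ _ (Multiset.pairwise_sort _ _) (Multiset.pairwise_sort _ _) ?_ x ?_ ?_
  · simp only [Multiset.length_sort, Multiset.card_add, hc]
  · intro y hy
    rw [← Multiset.coe_count, ← Multiset.coe_count, Multiset.sort_eq, Multiset.sort_eq,
      Multiset.count_add, Multiset.count_add, hN0 y hy.le, Multiset.count_cons_of_ne hy.ne,
      Multiset.count_eq_zero.2 fun h => absurd (hM y h) (not_le.2 hy)]
  · rw [← Multiset.coe_count, ← Multiset.coe_count, Multiset.sort_eq, Multiset.sort_eq,
      Multiset.count_add, Multiset.count_add, hN0 x le_rfl, Multiset.count_cons_self]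
    omega

lemma MLt.map {M N : Multiset ℝ} (h : MLt M N) {g : ℝ → ℝ} {s : Set ℝ} (hg : StrictMonoOn g s)
    (hM : ∀ x ∈ M, x ∈ s) (hN : ∀ x ∈ N, x ∈ s) : MLt (M.map g) (N.map g) := by
  obtain ⟨C, M', N', x, rfl, rfl, hc, h1, h2⟩ := h
  have hx : x ∈ s := hM x (by simp)
  refine ⟨C.map g, M'.map g, N'.map g, g x, by simp, by simp, by simpa using hc, ?_, ?_⟩
  · simp only [Multiset.mem_map]
    rintro _ ⟨y, hy, rfl⟩
    exact hg.monotoneOn hx (hM y (by simp [hy])) (h1 y hy)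
  · simp only [Multiset.mem_map]
    rintro _ ⟨y, hy, rfl⟩
    exact hg hx (hN y (by simp [hy])) (h2 y hy)

/-- The reflected elements `π - y` do not affect the comparison: they are at least `π / 2`, and
the deciding element `x` is below some element of `N`, hence less than `π / 2`. -/
lemma MLt.reflect {M N : Multiset ℝ} (h : MLt M N) (K : Multiset ℝ)
    (hM : ∀ x ∈ M, x ≤ Real.pi / 2) (hN : ∀ x ∈ N, x ≤ Real.pi / 2) :
    MLt (K + (M + M.map (Real.pi - ·))) (K + (N + N.map (Real.pi - ·))) := by
  obtain ⟨C, M', N', x, rfl, rfl, hc, h1, h2⟩ := h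
  have hx : x < Real.pi / 2 := by
    have : N' ≠ 0 := by
      rintro rfl
      simp at hc
    obtain ⟨y, hy⟩ := Multiset.exists_mem_of_ne_zero this
    exact (h2 y hy).trans_le (hN y (by simp [hy]))
  refine ⟨K + (C + C.map (Real.pi - ·)), M' + (x ::ₘ M').map (Real.pi - ·),
    N' + N'.map (Real.pi - ·), x, ?_, ?_, ?_, ?_, ?_⟩
  · simp only [Multiset.map_add, ← Multiset.singleton_add]; abel
  · simp only [Multiset.map_add]; abel
  · simp only [Multiset.card_cons, Multiset.card_add, Multiset.card_map] at hc ⊢; omega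
  · simp only [Multiset.mem_add, Multiset.mem_map]
    rintro y (hy | ⟨z, hz, rfl⟩)
    · exact h1 y hy
    · have := hM z (Multiset.mem_add.2 (Or.inr hz)); linarith
  · simp only [Multiset.mem_add, Multiset.mem_map]
    rintro y (hy | ⟨z, hz, rfl⟩)
    · exact h2 y hy
    · have := hN z (Multiset.mem_add.2 (Or.inr hz)); linarith

/-! ### Inscribed angles -/

/-- A difference of two points of the circle is a multiple of the unit tangent vector at the
midpoint of the arc between them. -/
lemma pt_sub_pt (α β : ℝ) : pt β - pt α =
    (2 * Real.sin ((β - α) / 2)) • !₂[-Real.sin ((α + β) / 2), Real.cos ((α + β) / 2)] := by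
  ext i
  fin_cases i
  · have := Real.cos_sub_cos β α
    simp [pt]
    rw [this, add_comm β α]; ring
  · have := Real.sin_sub_sin β α
    simp [pt]
    rw [this, add_comm β α]

lemma norm_tangent (t : ℝ) : ‖!₂[-Real.sin t, Real.cos t]‖ = 1 := by
  simp [EuclideanSpace.norm_eq]

lemma angle_tangent {s t : ℝ} (h0 : s ≤ t) (h1 : t - s ≤ Real.pi) :
    InnerProductGeometry.angle !₂[-Real.sin s, Real.cos s] !₂[-Real.sin t, Real.cos t] =
      t - s := by
  rw [InnerProductGeometry.angle, norm_tangent, norm_tangent]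
  have : inner ℝ !₂[-Real.sin s, Real.cos s] !₂[-Real.sin t, Real.cos t] =
      Real.cos (t - s) := by
    simp [PiLp.inner_apply, Real.cos_sub]
    ring
  rw [this, mul_one, div_one, Real.arccos_cos (by linarith) h1]

lemma norm_pt_sub_pt {α β : ℝ} (h : α < β) (h' : β < α + 2 * Real.pi) :
    ‖pt α - pt β‖ = 2 * Real.sin ((β - α) / 2) := by
  rw [norm_sub_rev, pt_sub_pt, norm_smul, norm_tangent, mul_one, Real.norm_of_nonneg]
  have := Real.sin_nonneg_of_nonneg_of_le_pi (x := (β - α) / 2) (by linarith) (by linarith)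
  linarith

lemma two_mul_sin_half_pos {α β : ℝ} (h : α < β) (h' : β < α + 2 * Real.pi) :
    0 < 2 * Real.sin ((β - α) / 2) := by
  have := Real.sin_pos_of_pos_of_lt_pi (x := (β - α) / 2) (by linarith) (by linarith)
  linarith

/-- Inscribed angle at the first of three vertices in counterclockwise order. -/
lemma angle_left {α β γ : ℝ} (h1 : α < β) (h2 : β < γ) (h3 : γ < α + 2 * Real.pi) :
    EuclideanGeometry.angle (pt β) (pt α) (pt γ) = (γ - β) / 2 := by
  rw [EuclideanGeometry.angle, vsub_eq_sub, vsub_eq_sub, pt_sub_pt, pt_sub_pt,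
    InnerProductGeometry.angle_smul_left_of_pos _ _ (two_mul_sin_half_pos h1 (by linarith)),
    InnerProductGeometry.angle_smul_right_of_pos _ _ (two_mul_sin_half_pos (by linarith) h3),
    angle_tangent (by linarith) (by linarith)]
  ring

/-- Inscribed angle at the second of three vertices in counterclockwise order; it faces the arc
from `γ` on to `α + 2π`. -/
lemma angle_mid {α β γ : ℝ} (h1 : α < β) (h2 : β < γ) (h3 : γ < α + 2 * Real.pi) :
    EuclideanGeometry.angle (pt α) (pt β) (pt γ) = Real.pi - (γ - α) / 2 := by
  rw [EuclideanGeometry.angle, vsub_eq_sub, vsub_eq_sub, ← neg_sub (pt β) (pt α),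
    InnerProductGeometry.angle_neg_left, pt_sub_pt, pt_sub_pt,
    InnerProductGeometry.angle_smul_left_of_pos _ _ (two_mul_sin_half_pos h1 (by linarith)),
    InnerProductGeometry.angle_smul_right_of_pos _ _ (two_mul_sin_half_pos h2 (by linarith)),
    angle_tangent (by linarith) (by linarith)]
  ring

/-- Inscribed angle at the third of three vertices in counterclockwise order. -/
lemma angle_right {α β γ : ℝ} (h1 : α < β) (h2 : β < γ) (h3 : γ < α + 2 * Real.pi) :
    EuclideanGeometry.angle (pt α) (pt γ) (pt β) = (β - α) / 2 := by
  rw [EuclideanGeometry.angle, vsub_eq_sub, vsub_eq_sub, ← neg_sub (pt γ) (pt α),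
    ← neg_sub (pt γ) (pt β), InnerProductGeometry.angle_neg_neg, pt_sub_pt, pt_sub_pt,
    InnerProductGeometry.angle_smul_left_of_pos _ _ (two_mul_sin_half_pos (by linarith) h3),
    InnerProductGeometry.angle_smul_right_of_pos _ _ (two_mul_sin_half_pos h2 (by linarith)),
    angle_tangent (by linarith) (by linarith)]
  ring

/-- The two angles facing a diagonal from its two sides are determined by its length, whichever of
its arcs is the shorter one. -/
lemma pair_arcsin_sin {x : ℝ} (h0 : 0 ≤ x) (h1 : x ≤ Real.pi) :
    ({x, Real.pi - x} : Multiset ℝ) =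
      {Real.arcsin (Real.sin x), Real.pi - Real.arcsin (Real.sin x)} := by
  by_cases h : x ≤ Real.pi / 2
  · rw [Real.arcsin_sin (by linarith) h]
  · rw [← Real.sin_pi_sub, Real.arcsin_sin (by linarith) (by linarith), sub_sub_cancel,
      Multiset.pair_comm]

/-! ### From index pairs modulo `n` to pairs of natural numbers -/

lemma val_succ_cases (i : ZMod n) :
    (i + 1).val = i.val + 1 ∨ ((i + 1).val = 0 ∧ i.val = n - 1) := by
  have hi := ZMod.val_lt i
  by_cases h : i.val + 1 < n
  · left
    have : i + 1 = ((i.val + 1 : ℕ) : ZMod n) := by simp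
    rw [this, ZMod.val_cast_of_lt h]
  · right
    have h' : i.val + 1 = n := by omega
    have : i + 1 = ((i.val + 1 : ℕ) : ZMod n) := by simp
    rw [this, h', ZMod.natCast_self, ZMod.val_zero]
    exact ⟨rfl, by omega⟩

lemma eq_succ_of_val {i j : ZMod n} (h : j.val = i.val + 1) : j = i + 1 := by
  rw [← ZMod.natCast_zmod_val j, h]; simp

lemma eq_succ_of_wrap {i j : ZMod n} (hi : i.val = 0) (hj : j.val = n - 1) : i = j + 1 := by
  have h : j + 1 = ((j.val + 1 : ℕ) : ZMod n) := by simp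
  have hn : n - 1 + 1 = n := by have := ZMod.val_lt i; omega
  rw [h, hj, hn, ZMod.natCast_self, ← ZMod.val_eq_zero, hi]

lemma IsDiag.val_gap {i j : ZMod n} (h : IsDiag s(i, j)) (hij : i.val < j.val) :
    i.val + 2 ≤ j.val ∧ ¬ (i.val = 0 ∧ j.val = n - 1) := by
  obtain ⟨a, b, hab, h1, h2, h3⟩ := h
  have key : j ≠ i + 1 ∧ i ≠ j + 1 := by
    rw [Sym2.eq_iff] at hab
    rcases hab with ⟨rfl, rfl⟩ | ⟨rfl, rfl⟩
    · exact ⟨h3, fun h => h1 (by rw [h]; ring)⟩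
    · exact ⟨fun h => h1 (by rw [h]; ring), h3⟩
  refine ⟨?_, fun h => key.2 (eq_succ_of_wrap h.1 h.2)⟩
  by_contra hlt
  exact key.1 (eq_succ_of_val (by omega))

lemma isChord_iff {i j : ZMod n} (hij : i.val < j.val) :
    IsChord s(i, j) ↔ j.val = i.val + 1 ∨ (i.val = 0 ∧ j.val = n - 1) := by
  constructor
  · rintro ⟨k, hk⟩
    have := val_succ_cases k
    rw [Sym2.eq_iff] at hk
    rcases hk with ⟨rfl, rfl⟩ | ⟨rfl, rfl⟩ <;> omega
  · rintro (h | ⟨h1, h2⟩)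
    · exact ⟨i, by rw [eq_succ_of_val h]⟩
    · exact ⟨j, by rw [← eq_succ_of_wrap h1 h2, Sym2.eq_swap]⟩

/-- The residues in `{0, …, n - 1}` of the two members of an index pair, in increasing order. -/
def natPair : Sym2 (ZMod n) → ℕ × ℕ :=
  Sym2.lift ⟨fun i j => (min i.val j.val, max i.val j.val), fun _ _ =>
    Prod.ext (min_comm _ _) (max_comm _ _)⟩

lemma natPair_of_lt {i j : ZMod n} (h : i.val < j.val) : natPair s(i, j) = (i.val, j.val) := by
  simp [natPair, h.le]

lemma exists_rep (d : Sym2 (ZMod n)) : ∃ i j : ZMod n, i.val ≤ j.val ∧ d = s(i, j) ∧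
    natPair d = (i.val, j.val) := by
  induction d with
  | h i j =>
    rcases le_total i.val j.val with h | h
    · exact ⟨i, j, h, rfl, by simp [natPair, h]⟩
    · exact ⟨j, i, h, Sym2.eq_swap, by simp [natPair, h]⟩

lemma natPair_injective : Function.Injective (natPair (n := n)) := by
  intro d e h
  obtain ⟨i, j, -, rfl, h1⟩ := exists_rep d
  obtain ⟨k, l, -, rfl, h2⟩ := exists_rep e
  rw [h1, h2, Prod.mk.injEq] at h
  rw [ZMod.val_injective n h.1, ZMod.val_injective n h.2]

lemma IsDiag.exists_rep {d : Sym2 (ZMod n)} (hd : IsDiag d) : ∃ i j : ZMod n, i.val < j.val ∧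
    d = s(i, j) ∧ natPair d = (i.val, j.val) := by
  obtain ⟨i, j, hij, rfl, h⟩ := _root_.exists_rep d
  refine ⟨i, j, lt_of_le_of_ne hij fun h' => ?_, rfl, h⟩
  obtain ⟨a, b, hab, -, h2, -⟩ := hd
  have := ZMod.val_injective n h'
  subst this
  rw [Sym2.eq_iff] at hab
  rcases hab with ⟨rfl, rfl⟩ | ⟨rfl, rfl⟩ <;> exact h2 rfl

lemma crosses_of_val {x y z w : ZMod n} (h1 : x.val < z.val) (h2 : z.val < y.val)
    (h3 : y.val < w.val) : Crosses s(x, y) s(z, w) := by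
  refine ⟨x, y, z, w, rfl, rfl, ⟨?_, ?_⟩, ⟨?_, ?_⟩⟩
  · rw [ZMod.val_sub h1.le]; omega
  · rw [ZMod.val_sub h1.le, ZMod.val_sub (by omega)]; omega
  · rw [ZMod.val_sub h3.le]; omega
  · have hne : y - x ≠ 0 := by
      intro h
      rw [sub_eq_zero] at h
      rw [h] at h2; omega
    have : NeZero (y - x) := ⟨hne⟩
    rw [ZMod.val_sub h3.le, ← neg_sub y x, ZMod.val_neg_of_ne_zero, ZMod.val_sub (by omega)]
    have := ZMod.val_lt w
    omega

open scoped Classical in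
/-- The pairs of residues of the diagonals in `τ`, together with the chord `(0, n - 1)`, the only
chord whose residues are not consecutive. -/
noncomputable def natSet (τ : Finset (Sym2 (ZMod n))) : Finset (ℕ × ℕ) :=
  insert (0, n - 1) (τ.image natPair)

lemma mem_natSet {τ : Finset (Sym2 (ZMod n))} {i j : ZMod n} (hij : i.val < j.val) :
    (i.val, j.val) ∈ natSet τ ↔ (i.val = 0 ∧ j.val = n - 1) ∨ s(i, j) ∈ τ := by
  classical
  rw [natSet, Finset.mem_insert, Prod.mk.injEq, ← natPair_of_lt hij,
    natPair_injective.mem_finset_image]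

lemma side_natSet {τ : Finset (Sym2 (ZMod n))} {i j : ZMod n} (hij : i.val < j.val) :
    Side (natSet τ) i.val j.val ↔ IsSide τ s(i, j) := by
  rw [Side, IsSide, mem_natSet hij, isChord_iff hij, or_assoc]

lemma natSet_cases {τ : Finset (Sym2 (ZMod n))} (hτ : IsTriangulation τ) {x y : ℕ}
    (h : (x, y) ∈ natSet τ) : (x = 0 ∧ y = n - 1) ∨
      ∃ i j : ZMod n, s(i, j) ∈ τ ∧ i.val = x ∧ j.val = y ∧ x + 2 ≤ y ∧ ¬ (x = 0 ∧ y = n - 1) := by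
  classical
  rw [natSet, Finset.mem_insert, Prod.mk.injEq, Finset.mem_image] at h
  refine h.imp_right ?_
  rintro ⟨d, hd, he⟩
  have hdiag := hτ.2.1 d hd
  obtain ⟨i, j, hij, rfl, h'⟩ := hdiag.exists_rep
  rw [h', Prod.mk.injEq] at he
  obtain ⟨rfl, rfl⟩ := he
  exact ⟨i, j, hd, rfl, rfl, hdiag.val_gap hij⟩

lemma nonCrossing_natSet (hn : 4 ≤ n) {τ : Finset (Sym2 (ZMod n))} (hτ : IsTriangulation τ) :
    NonCrossing (natSet τ) := by
  constructor
  · intro x y h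
    rcases natSet_cases hτ h with h | ⟨i, j, -, -, -, h, -⟩ <;> omega
  · intro x y z w h1 h2 hxz hzy hyw
    have hw : w ≤ n - 1 := by
      rcases natSet_cases hτ h2 with h | ⟨i, j, -, -, h, -⟩
      · omega
      · have := ZMod.val_lt j; omega
    rcases natSet_cases hτ h1 with h | ⟨i, j, hd, rfl, rfl, -⟩
    · omega
    rcases natSet_cases hτ h2 with h | ⟨k, l, he, rfl, rfl, -⟩
    · omega
    exact hτ.2.2 _ hd _ he (crosses_of_val hxz hzy hyw)

lemma corner_notMem {τ : Finset (Sym2 (ZMod n))} (hτ : IsTriangulation τ) :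
    (0, n - 1) ∉ τ.image natPair := by
  rw [Finset.mem_image]
  rintro ⟨d, hd, he⟩
  have hdiag := hτ.2.1 d hd
  obtain ⟨i, j, hij, rfl, h'⟩ := hdiag.exists_rep
  rw [h', Prod.mk.injEq] at he
  exact (hdiag.val_gap hij).2 he

lemma within_natSet {τ : Finset (Sym2 (ZMod n))} (hτ : IsTriangulation τ) :
    within (natSet τ) 0 (n - 1) = natSet τ := by
  refine Finset.filter_true_of_mem ?_
  rintro ⟨x, y⟩ h
  refine ⟨Nat.zero_le _, ?_⟩
  rcases natSet_cases hτ h with h | ⟨i, j, -, -, h, -⟩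
  · exact h.2.le
  · have := ZMod.val_lt j
    simp only; omega

/-- A triangulation attains the bound of `NonCrossing.card_within` on `[0, n - 1]`. -/
lemma card_within_natSet (hn : 4 ≤ n) {τ : Finset (Sym2 (ZMod n))} (hτ : IsTriangulation τ) :
    (within (natSet τ) 0 (n - 1)).card + 1 + 0 = n - 1 := by
  classical
  rw [within_natSet hτ, natSet, Finset.card_insert_of_notMem (by convert corner_notMem hτ),
    Finset.card_image_of_injective _ natPair_injective, hτ.1]
  omega

/-! ### The angles of a triangulation -/

/-- Half of the arc from the point with index `x` to the point with index `y`, for `x < y < n`. -/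
noncomputable def halfArc (θ : ZMod n → ℝ) (x y : ℕ) : ℝ := (θ (y : ZMod n) - θ (x : ZMod n)) / 2

/-- The angles facing the `n` chords, the same in every triangulation. The chord `{n - 1, 0}`
cuts off the arc that complements the one from index `0` to index `n - 1`. -/
noncomputable def boundaryAngles (θ : ZMod n → ℝ) : Multiset ℝ :=
  (∑ x ∈ Finset.Ico 0 (n - 1), {halfArc θ x (x + 1)}) + {Real.pi - halfArc θ 0 (n - 1)}

/-- For each diagonal of `τ`, the smaller of the two angles facing it. -/
noncomputable def diagAngles (p : ZMod n → EuclideanSpace ℝ (Fin 2))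
    (τ : Finset (Sym2 (ZMod n))) : Multiset ℝ :=
  (τ.val.map (len p)).map fun x => Real.arcsin (x / 2)

/-- The angles of `τ`: those facing the chords, and for each diagonal a supplementary pair whose
smaller member is determined by the length of the diagonal. -/
lemma sortedAngles_eq (hn : 4 ≤ n) (θ : ZMod n → ℝ)
    (hmono : ∀ i j : ZMod n, i.val < j.val → θ i < θ j)
    (hlb : ∀ i : ZMod n, 0 ≤ θ i) (hub : ∀ i : ZMod n, θ i < 2 * Real.pi)
    (p : ZMod n → EuclideanSpace ℝ (Fin 2)) (hp : ∀ i : ZMod n, p i = pt (θ i))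
    {τ : Finset (Sym2 (ZMod n))} (hτ : IsTriangulation τ) :
    sortedAngles p τ = (boundaryAngles θ +
      (diagAngles p τ + (diagAngles p τ).map (Real.pi - ·))).sort (· ≤ ·) := by
  classical
  have hspan : ∀ i j : ZMod n, θ j < θ i + 2 * Real.pi := fun i j => by
    have := hlb i; have := hub j; linarith
  rw [sortedAngles]
  congr 1
  have hmain := (nonCrossing_natSet hn hτ).sum_tris (halfArc θ) _ 0 (n - 1) (by omega) le_rfl
    (card_within_natSet hn hτ)
  have hdiag : ∑ e ∈ τ.image natPair,
      ({halfArc θ e.1 e.2, Real.pi - halfArc θ e.1 e.2} : Multiset ℝ) =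
      diagAngles p τ + (diagAngles p τ).map (Real.pi - ·) := by
    rw [Finset.sum_image natPair_injective.injOn]
    have : ∀ d ∈ τ, ({halfArc θ (natPair d).1 (natPair d).2,
        Real.pi - halfArc θ (natPair d).1 (natPair d).2} : Multiset ℝ) =
        {Real.arcsin (len p d / 2)} + {Real.pi - Real.arcsin (len p d / 2)} := by
      intro d hd
      obtain ⟨i, j, hij, rfl, h'⟩ := (hτ.2.1 d hd).exists_rep
      have hθ := hmono i j hij
      have hlen : len p s(i, j) / 2 = Real.sin ((θ j - θ i) / 2) := by
        simp only [len, Sym2.lift_mk, hp]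
        rw [norm_pt_sub_pt hθ (hspan _ _)]; ring
      rw [h', hlen, Multiset.singleton_add, ← Multiset.insert_eq_cons]
      have := hspan i j
      simp only [halfArc, ZMod.natCast_zmod_val]
      exact pair_arcsin_sin (by linarith) (by linarith)
    rw [Finset.sum_congr rfl this, Finset.sum_add_distrib]
    simp only [diagAngles, Multiset.map_map, Function.comp_def]
    have hsum : ∀ g : Sym2 (ZMod n) → ℝ, ∑ d ∈ τ, ({g d} : Multiset ℝ) = τ.val.map g := by
      intro g
      rw [Finset.sum, ← Multiset.sum_map_singleton (τ.val.map g), Multiset.map_map]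
      rfl
    rw [hsum, hsum]
  have hcorner : (0, n - 1) ∉ τ.image natPair := by convert corner_notMem hτ
  have hset : natSet τ = insert (0, n - 1) (τ.image natPair) := by
    unfold natSet; congr!
  rw [within_natSet hτ, hset, Finset.sum_insert hcorner, hdiag, ← hset] at hmain
  have htri : (Multiset.bind (Finset.univ.filter fun x : ZMod n × ZMod n × ZMod n =>
      x.1.val < x.2.1.val ∧ x.2.1.val < x.2.2.val ∧
      IsSide τ s(x.1, x.2.1) ∧ IsSide τ s(x.2.1, x.2.2) ∧ IsSide τ s(x.1, x.2.2)).val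
      fun x =>
      ({EuclideanGeometry.angle (p x.2.1) (p x.1) (p x.2.2),
       EuclideanGeometry.angle (p x.1) (p x.2.1) (p x.2.2),
       EuclideanGeometry.angle (p x.1) (p x.2.2) (p x.2.1)} : Multiset ℝ)) =
      ∑ t ∈ tris (natSet τ) 0 (n - 1), ({halfArc θ t.2.1 t.2.2,
        Real.pi - halfArc θ t.1 t.2.2, halfArc θ t.1 t.2.1} : Multiset ℝ) := by
    refine Finset.sum_bij (fun x _ => (x.1.val, x.2.1.val, x.2.2.val)) ?_ ?_ ?_ ?_
    · rintro ⟨i, j, k⟩ h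
      obtain ⟨-, h1, h2, h3, h4, h5⟩ := Finset.mem_filter.1 h
      simp only at h1 h2 h3 h4 h5
      have := ZMod.val_lt k
      exact mem_tris.2 ⟨Nat.zero_le _, Nat.le_sub_one_of_lt this, h1, h2, (side_natSet h1).2 h3,
        (side_natSet h2).2 h4, (side_natSet (h1.trans h2)).2 h5⟩
    · rintro ⟨i, j, k⟩ - ⟨i', j', k'⟩ - h
      simp only [Prod.mk.injEq] at h
      rw [ZMod.val_injective n h.1, ZMod.val_injective n h.2.1, ZMod.val_injective n h.2.2]
    · rintro ⟨x, y, z⟩ h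
      obtain ⟨-, hz, h1, h2, h3, h4, h5⟩ := mem_tris.1 h
      obtain ⟨i, rfl⟩ : ∃ i : ZMod n, i.val = x := ⟨x, ZMod.val_cast_of_lt (by omega)⟩
      obtain ⟨j, rfl⟩ : ∃ i : ZMod n, i.val = y := ⟨y, ZMod.val_cast_of_lt (by omega)⟩
      obtain ⟨k, rfl⟩ : ∃ i : ZMod n, i.val = z := ⟨z, ZMod.val_cast_of_lt (by omega)⟩
      exact ⟨(i, j, k), Finset.mem_filter.2 ⟨Finset.mem_univ _, h1, h2, (side_natSet h1).1 h3,
        (side_natSet h2).1 h4, (side_natSet (h1.trans h2)).1 h5⟩, rfl⟩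
    · rintro ⟨i, j, k⟩ h
      obtain ⟨-, h1, h2, -⟩ := Finset.mem_filter.1 h
      have h1 := hmono _ _ h1
      have h2 := hmono _ _ h2
      simp only [hp, halfArc, ZMod.natCast_zmod_val]
      rw [angle_left h1 h2 (hspan _ _), angle_mid h1 h2 (hspan _ _), angle_right h1 h2 (hspan _ _)]
  have hgoal : ∑ t ∈ tris (natSet τ) 0 (n - 1), ({halfArc θ t.2.1 t.2.2,
        Real.pi - halfArc θ t.1 t.2.2, halfArc θ t.1 t.2.1} : Multiset ℝ) =
      boundaryAngles θ + (diagAngles p τ + (diagAngles p τ).map (Real.pi - ·)) := by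
    -- the surplus `f 0 (n - 1)` of `sum_tris` is also a term of the extra member `(0, n - 1)`
    apply add_right_cancel (b := ({halfArc θ 0 (n - 1)} : Multiset ℝ))
    rw [hmain, boundaryAngles]
    simp only [Multiset.insert_eq_cons, ← Multiset.singleton_add]
    abel
  rw [← hgoal, ← htri]

lemma lexLE_iff {l l' : List ℝ} : lexLE l l' ↔ ¬ List.Lex (· < ·) l' l := by
  constructor
  · rintro (rfl | h) h'
    · exact (Std.Asymm.asymm (r := List.Lex (· < ·)) _ _ h') h'
    · exact Std.Asymm.asymm (r := List.Lex (· < ·)) _ _ h h'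
  · intro h
    by_contra hc
    rw [lexLE, not_or] at hc
    exact hc.1 (Std.Trichotomous.trichotomous (r := List.Lex (· < ·)) _ _ hc.2 h)

theorem stmt2 {n : ℕ} [NeZero n] (hn : 4 ≤ n)
    (θ : ZMod n → ℝ)
    (hmono : ∀ i j : ZMod n, i.val < j.val → θ i < θ j)
    (hlb : ∀ i : ZMod n, 0 ≤ θ i) (hub : ∀ i : ZMod n, θ i < 2 * Real.pi)
    (p : ZMod n → EuclideanSpace ℝ (Fin 2)) (hp : ∀ i : ZMod n, p i = pt (θ i))
    (τ : Finset (Sym2 (ZMod n))) (hτ : IsTriangulation τ) :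
    AngleMaximal p τ ↔ LengthMaximal p τ := by
  have hlen : ∀ σ : Finset (Sym2 (ZMod n)), ∀ x ∈ σ.val.map (len p), x ∈ Set.Icc (0 : ℝ) 2 := by
    intro σ x hx
    obtain ⟨d, -, rfl⟩ := Multiset.mem_map.1 hx
    induction d with
    | h i j =>
      have hnorm : ∀ t, ‖pt t‖ = 1 := fun t => by simp [pt, EuclideanSpace.norm_eq]
      simp only [len, Sym2.lift_mk, hp]
      refine ⟨norm_nonneg _, (norm_sub_le _ _).trans ?_⟩
      rw [hnorm, hnorm]; norm_num
  have hstrict : StrictMonoOn (fun x : ℝ => Real.arcsin (x / 2)) (Set.Icc 0 2) := by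
    intro x hx y hy hxy
    simp only [Set.mem_Icc] at hx hy
    exact Real.strictMonoOn_arcsin ⟨by linarith, by linarith⟩ ⟨by linarith, by linarith⟩
      (by linarith)
  have hle : ∀ σ, ∀ x ∈ diagAngles p σ, x ≤ Real.pi / 2 := by
    intro σ x hx
    obtain ⟨y, -, rfl⟩ := Multiset.mem_map.1 hx
    exact Real.arcsin_le_pi_div_two _
  have hstep : ∀ σ σ' : Finset (Sym2 (ZMod n)), IsTriangulation σ → IsTriangulation σ' →
      MLt (σ.val.map (len p)) (σ'.val.map (len p)) →
      List.Lex (· < ·) (sortedLengths p σ) (sortedLengths p σ') ∧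
      List.Lex (· < ·) (sortedAngles p σ) (sortedAngles p σ') := by
    intro σ σ' h h' hlt
    refine ⟨hlt.lex, ?_⟩
    rw [sortedAngles_eq hn θ hmono hlb hub p hp h, sortedAngles_eq hn θ hmono hlb hub p hp h']
    exact ((hlt.map hstrict (hlen σ) (hlen σ')).reflect _ (hle σ) (hle σ')).lex
  have hkey : ∀ σ : Finset (Sym2 (ZMod n)), IsTriangulation σ →
      (lexLE (sortedAngles p σ) (sortedAngles p τ) ↔
        lexLE (sortedLengths p σ) (sortedLengths p τ)) := by
    intro σ hσ
    have hcard : (σ.val.map (len p)).card = (τ.val.map (len p)).card := by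
      rw [Multiset.card_map, Multiset.card_map]
      exact hσ.1.trans hτ.1.symm
    rcases MLt.trichotomy hcard with h | h | h
    · refine iff_of_true (Or.inl ?_) (Or.inl ?_)
      · rw [sortedAngles_eq hn θ hmono hlb hub p hp hσ,
          sortedAngles_eq hn θ hmono hlb hub p hp hτ, diagAngles, diagAngles, h]
      · rw [sortedLengths, sortedLengths, h]
    · obtain ⟨h1, h2⟩ := hstep σ τ hσ hτ h
      exact iff_of_true (Or.inr h2) (Or.inr h1)
    · obtain ⟨h1, h2⟩ := hstep τ σ hτ hσ h
      rw [lexLE_iff, lexLE_iff]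
      exact iff_of_false (not_not_intro h2) (not_not_intro h1)
  unfold AngleMaximal LengthMaximal
  exact and_congr_right fun _ => forall₂_congr hkey
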